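/- arXiv:math/0211387 — 4 statements merged into one kernel-verified Lean document; each statement's English description precedes it below -/
import Mathlib

section
/- Let τ ∈ [0,1]. For every n ≥ 1 and every permutation σ of {1,…,n}, the pushforward of the urn measure m_n under the coordinate-permutation map x ↦ x ∘ σ equals m_n; that is, the family (m_n) is exchangeable. -/
open MeasureTheory

noncomputable section

/-- The circle `ℝ/ℤ`. -/
abbrev Circle1 : Type := AddCircle (1 : ℝ)

/-- The Pólya-urn type Markov kernel
`κ_n(x, ·) = ((1−τ)·λ + τ·Σ_{i=1}^n δ_{x_i}) / ((1−τ) + nτ)`. -/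
def urnKernel (τ : ℝ) {n : ℕ} (x : Fin n → Circle1) : Measure Circle1 :=
  (ENNReal.ofReal ((1 - τ) + n * τ))⁻¹ •
    (ENNReal.ofReal (1 - τ) • (volume : Measure Circle1)
      + ENNReal.ofReal τ • ∑ i : Fin n, Measure.dirac (x i))

/-- The urn measures: `m 1 = λ` and `m (n+1)` is the image of the measure–kernel
product `m n ⊗ κ_n` under `(x, y) ↦ (x_1, …, x_n, y)`.  (`m 0` is a dummy value.) -/
def urnMeasure (τ : ℝ) : (n : ℕ) → Measure (Fin n → Circle1)
  | 0 => Measure.dirac (fun i => i.elim0)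
  | 1 => (volume : Measure Circle1).map (fun y => fun _ : Fin 1 => y)
  | (n + 2) =>
      (urnMeasure τ (n + 1)).bind
        (fun x => (urnKernel τ x).map (Fin.snoc x))

theorem meas_snoc_aux (n : ℕ) : Measurable (fun p : (Fin n → Circle1) × Circle1 =>
    (Fin.snoc p.1 p.2 : Fin (n+1) → Circle1)) := by
  refine measurable_pi_iff.2 fun i => ?_
  refine Fin.lastCases ?_ (fun j => ?_) i
  · simpa using measurable_snd
  · simpa [Function.comp_def] using (measurable_pi_apply j).comp measurable_fst

theorem meas_snoc2 {α : Type*} [MeasurableSpace α] {n : ℕ} {g : α → (Fin n → Circle1)}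
    {h : α → Circle1} (hg : Measurable g) (hh : Measurable h) :
    Measurable (fun p => (Fin.snoc (g p) (h p) : Fin (n+1) → Circle1)) :=
  (meas_snoc_aux n).comp (hg.prodMk hh)

theorem lint_step (τ : ℝ) {n : ℕ} (x : Fin n → Circle1) (f : (Fin (n+1) → Circle1) → ENNReal)
    (hf : Measurable f) :
    ∫⁻ z, f z ∂((urnKernel τ x).map (Fin.snoc x)) =
      (ENNReal.ofReal ((1 - τ) + n * τ))⁻¹ * (ENNReal.ofReal (1 - τ) * (∫⁻ y, f (Fin.snoc x y))
        + ENNReal.ofReal τ * ∑ i, f (Fin.snoc x (x i))) := by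
  have hs : Measurable (fun y : Circle1 => (Fin.snoc x y : Fin (n+1) → Circle1)) :=
    meas_snoc2 measurable_const measurable_id
  have hfs : Measurable (fun y : Circle1 => f (Fin.snoc x y)) := hf.comp hs
  rw [lintegral_map hf hs, urnKernel, lintegral_smul_measure, lintegral_add_measure,
    lintegral_smul_measure, lintegral_smul_measure, lintegral_finsetSum_measure]
  simp only [smul_eq_mul, lintegral_dirac' _ hfs]

theorem meas_rhs (τ : ℝ) {n : ℕ} (f : (Fin (n+1) → Circle1) → ENNReal) (hf : Measurable f) :
    Measurable (fun x : Fin n → Circle1 =>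
      (ENNReal.ofReal ((1 - τ) + n * τ))⁻¹ * (ENNReal.ofReal (1 - τ) * (∫⁻ y, f (Fin.snoc x y))
        + ENNReal.ofReal τ * ∑ i, f (Fin.snoc x (x i)))) := by
  refine Measurable.const_mul (Measurable.add (Measurable.const_mul ?_ _)
    (Measurable.const_mul ?_ _)) _
  · exact (hf.comp (meas_snoc_aux n)).lintegral_prod_right'
  · exact Finset.measurable_fun_sum _ fun i _ =>
      hf.comp (meas_snoc2 measurable_id (measurable_pi_apply i))

theorem meas_ker (τ : ℝ) (n : ℕ) : Measurable (fun x : Fin n → Circle1 =>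
    ((urnKernel τ x).map (Fin.snoc x) : Measure (Fin (n+1) → Circle1))) := by
  refine Measure.measurable_of_measurable_coe _ fun s hs => ?_
  have h := meas_rhs τ (n := n) (s.indicator 1) (measurable_one.indicator hs)
  convert h using 2 with x
  rw [← lint_step τ x _ (measurable_one.indicator hs), lintegral_indicator_one hs]

theorem lint_urn (τ : ℝ) (n : ℕ) (f : (Fin (n+2) → Circle1) → ENNReal) (hf : Measurable f) :
    ∫⁻ z, f z ∂(urnMeasure τ (n+2)) = ∫⁻ x, 
      ((ENNReal.ofReal ((1 - τ) + (n+1 : ℕ) * τ))⁻¹ *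
        (ENNReal.ofReal (1 - τ) * (∫⁻ y, f (Fin.snoc x y))
        + ENNReal.ofReal τ * ∑ i, f (Fin.snoc x (x i)))) ∂(urnMeasure τ (n+1)) := by
  rw [urnMeasure, Measure.lintegral_bind (meas_ker τ (n+1)).aemeasurable hf.aemeasurable]
  exact lintegral_congr fun x => lint_step τ x f hf

theorem snoc_swap {n : ℕ} (x : Fin n → Circle1) (y z : Circle1) :
    (Fin.snoc (Fin.snoc x y : Fin (n+1) → Circle1) z : Fin (n+2) → Circle1) ∘
      (Equiv.swap (Fin.last n).castSucc (Fin.last n).succ) =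
    (Fin.snoc (Fin.snoc x z : Fin (n+1) → Circle1) y : Fin (n+2) → Circle1) := by
  funext i
  refine Fin.lastCases ?_ (fun j => ?_) i
  · rw [← Fin.succ_last]
    simp only [Function.comp, Equiv.swap_apply_right, Fin.snoc_castSucc, Fin.snoc_last]
    rw [Fin.succ_last, Fin.snoc_last]
  · refine Fin.lastCases ?_ (fun k => ?_) j
    · simp only [Function.comp, Equiv.swap_apply_left, Fin.snoc_castSucc, Fin.snoc_last]
      rw [Fin.succ_last, Fin.snoc_last]
    · rw [Function.comp, Equiv.swap_apply_of_ne_of_ne]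
      · simp only [Fin.snoc_castSucc]
      · simp [Fin.ext_iff]; omega
      · simp [Fin.ext_iff]; omega

theorem snoc_comp {n : ℕ} (x : Fin (n+1) → Circle1) (y : Circle1) (j : Fin n) :
    (Fin.snoc x y : Fin (n+2) → Circle1) ∘
      (Equiv.swap j.castSucc.castSucc j.castSucc.succ) =
    (Fin.snoc (x ∘ Equiv.swap j.castSucc j.succ) y : Fin (n+2) → Circle1) := by
  funext i
  refine Fin.lastCases ?_ (fun k => ?_) i
  · rw [Function.comp, Equiv.swap_apply_of_ne_of_ne]
    · simp only [Fin.snoc_last]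
    · simp [Fin.ext_iff]; omega
    · simp [Fin.ext_iff]; omega
  · rw [Function.comp, Fin.succ_castSucc,
      ← Function.Injective.map_swap (Fin.castSucc_injective (n+1))]
    simp only [Fin.snoc_castSucc, Function.comp]

theorem meas_comp {n : ℕ} (σ : Equiv.Perm (Fin n)) :
    Measurable (fun x : Fin n → Circle1 => x ∘ σ) :=
  measurable_pi_iff.2 fun i => measurable_pi_apply (σ i)

theorem split_aux (c a : ENNReal) {A B : Circle1 → ENNReal} (hA : Measurable A)
    (hB : Measurable B) : ∫⁻ y, c * (a * A y + B y) = c * (a * (∫⁻ y, A y) + ∫⁻ y, B y) := by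
  rw [lintegral_const_mul _ (by fun_prop), lintegral_add_right _ hB,
    lintegral_const_mul _ hA]

theorem split_aux2 (c a t : ENNReal) {A B D : Circle1 → ENNReal} (hA : Measurable A)
    (hB : Measurable B) (hD : Measurable D) : ∫⁻ y, c * (a * A y + t * (B y + D y)) =
      c * (a * (∫⁻ y, A y) + t * ((∫⁻ y, B y) + ∫⁻ y, D y)) := by
  rw [split_aux c a hA (by fun_prop), lintegral_const_mul _ (by fun_prop),
    lintegral_add_right _ hD]

theorem swap_last (τ : ℝ) (n : ℕ) (f : (Fin (n+2) → Circle1) → ENNReal) (hf : Measurable f) :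
    ∫⁻ z, f (z ∘ (Equiv.swap (Fin.last n).castSucc (Fin.last n).succ)) ∂(urnMeasure τ (n+2))
      = ∫⁻ z, f z ∂(urnMeasure τ (n+2)) := by
  have hf' : Measurable (fun z => f (z ∘ (Equiv.swap (Fin.last n).castSucc (Fin.last n).succ))) :=
      hf.comp (meas_comp _)
  rw [lint_urn τ n _ hf, lint_urn τ n _ hf']
  cases n with
  | zero =>
    have hm : Measurable (fun (y : Circle1) => fun _ : Fin 1 => y) :=
      measurable_pi_iff.2 fun _ => measurable_id
    have e : ∀ y : Circle1, (fun _ : Fin 1 => y) = Fin.snoc (Fin.elim0 : Fin 0 → Circle1) y := by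
      intro y; funext i
      rw [Subsingleton.elim i (Fin.last 0), Fin.snoc_last]
    rw [urnMeasure, lintegral_map (meas_rhs τ _ hf') hm, lintegral_map (meas_rhs τ _ hf) hm]
    simp only [e, snoc_swap]
    have m1 : Measurable (fun p : Circle1 × Circle1 =>
        f (Fin.snoc (Fin.snoc (Fin.elim0 : Fin 0 → Circle1) p.1 : Fin 1 → Circle1) p.2)) :=
      hf.comp (meas_snoc2 (meas_snoc2 measurable_const measurable_fst) measurable_snd)
    have m2 : Measurable (fun p : Circle1 × Circle1 =>
        f (Fin.snoc (Fin.snoc (Fin.elim0 : Fin 0 → Circle1) p.2 : Fin 1 → Circle1) p.1)) :=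
      m1.comp measurable_swap
    have q1 : Measurable fun y : Circle1 => ∫⁻ z : Circle1, f (Fin.snoc (Fin.snoc (Fin.elim0 : Fin 0 → Circle1) y : Fin 1 → Circle1) z) :=
       m1.lintegral_prod_right' (ν := (volume : Measure Circle1))
    have sw := lintegral_lintegral_swap (μ := (volume : Measure Circle1))
      (ν := (volume : Measure Circle1)) (f := fun a b => f (Fin.snoc (Fin.snoc (Fin.elim0 : Fin 0 → Circle1) a : Fin 1 → Circle1) b)) m1.aemeasurable
    have q2 : Measurable fun y : Circle1 => ∫⁻ z : Circle1, f (Fin.snoc (Fin.snoc (Fin.elim0 : Fin 0 → Circle1) z : Fin 1 → Circle1) y) :=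
       m2.lintegral_prod_right' (ν := (volume : Measure Circle1))
    have hd : Measurable fun y : Circle1 => ENNReal.ofReal τ * ∑ i : Fin (0+1), 
        f (Fin.snoc (Fin.snoc (Fin.elim0 : Fin 0 → Circle1) y : Fin 1 → Circle1) y) :=
      (Finset.measurable_fun_sum _ fun i _ =>
        m1.comp (measurable_id.prodMk measurable_id)).const_mul _
    rw [split_aux _ _ q1 hd, split_aux _ _ q2 hd, sw]
  | succ n =>
    rw [lint_urn τ n _ (meas_rhs τ _ hf'), lint_urn τ n _ (meas_rhs τ _ hf)]
    refine lintegral_congr fun x => ?_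
    congr 1
    simp only [snoc_swap]
    simp only [Fin.sum_univ_castSucc (n := n+1), Fin.snoc_castSucc, Fin.snoc_last]
    have m1 : Measurable (fun p : Circle1 × Circle1 =>
        f (Fin.snoc (Fin.snoc x p.1 : Fin (n+2) → Circle1) p.2)) :=
      hf.comp (meas_snoc2 (meas_snoc2 measurable_const measurable_fst) measurable_snd)
    have m2 : Measurable (fun p : Circle1 × Circle1 =>
        f (Fin.snoc (Fin.snoc x p.2 : Fin (n+2) → Circle1) p.1)) :=
      m1.comp measurable_swap
    have q1 : Measurable fun y : Circle1 => ∫⁻ z : Circle1, f (Fin.snoc (Fin.snoc x y : Fin (n+2) → Circle1) z) :=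
       m1.lintegral_prod_right' (ν := (volume : Measure Circle1))
    have sw := lintegral_lintegral_swap (μ := (volume : Measure Circle1))
      (ν := (volume : Measure Circle1)) (f := fun a b => f (Fin.snoc (Fin.snoc x a : Fin (n+2) → Circle1) b)) m1.aemeasurable
    have q2 : Measurable fun y : Circle1 => ∫⁻ z : Circle1, f (Fin.snoc (Fin.snoc x z : Fin (n+2) → Circle1) y) :=
       m2.lintegral_prod_right' (ν := (volume : Measure Circle1))
    have r1 : ∀ i, Measurable fun y : Circle1 =>
        f (Fin.snoc (Fin.snoc x y : Fin (n+2) → Circle1) (x i)) := fun i =>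
      m1.comp (measurable_id.prodMk measurable_const)
    have r2 : ∀ i, Measurable fun y : Circle1 =>
        f (Fin.snoc (Fin.snoc x (x i) : Fin (n+2) → Circle1) y) := fun i =>
      m2.comp (measurable_id.prodMk measurable_const)
    have d : Measurable fun y : Circle1 =>
        f (Fin.snoc (Fin.snoc x y : Fin (n+2) → Circle1) y) :=
      m1.comp (measurable_id.prodMk measurable_id)
    have s1 := Finset.measurable_fun_sum Finset.univ fun i _ => r1 i
    have s2 := Finset.measurable_fun_sum Finset.univ fun i _ => r2 i
    rw [split_aux2 _ _ _ q1 s1 d, split_aux2 _ _ _ q2 s2 d,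
      lintegral_finsetSum _ (fun i _ => r1 i), lintegral_finsetSum _ (fun i _ => r2 i), sw]
    have c : ∑ i, ∑ j, f (Fin.snoc (Fin.snoc x (x i) : Fin (n+2) → Circle1) (x j)) =
      ∑ i, ∑ j, f (Fin.snoc (Fin.snoc x (x j) : Fin (n+2) → Circle1) (x i)) := Finset.sum_comm
    simp only [← Finset.mul_sum, Finset.sum_add_distrib, mul_add]
    rw [c]
    ring

theorem adj_swap (τ : ℝ) : ∀ (n : ℕ) (i : Fin n) (f : (Fin (n+1) → Circle1) → ENNReal),
    Measurable f → ∫⁻ z, f (z ∘ (Equiv.swap i.castSucc i.succ)) ∂(urnMeasure τ (n+1))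
      = ∫⁻ z, f z ∂(urnMeasure τ (n+1))
  | 0, i, _, _ => i.elim0
  | n + 1, i, f, hf => by
    revert i
    refine Fin.lastCases (swap_last τ n f hf) (fun j => ?_)
    have hf' : Measurable (fun z => f (z ∘ (Equiv.swap j.castSucc.castSucc j.castSucc.succ))) :=
      hf.comp (meas_comp _)
    rw [lint_urn τ n _ hf, lint_urn τ n _ hf', ← adj_swap τ n j _ (meas_rhs τ _ hf)]
    refine lintegral_congr fun x => ?_
    simp only [snoc_comp]
    congr 3
    exact (Equiv.sum_comp (Equiv.swap j.castSucc j.succ) (fun i =>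
      f (Fin.snoc (x ∘ Equiv.swap j.castSucc j.succ) (x i)))).symm

/-- for every `n ≥ 1` and every permutation `σ` of the coordinates, the
pushforward of the urn measure `m_n` under `x ↦ x ∘ σ` equals `m_n`: the family
`(m_n)` is exchangeable. -/
theorem urnMeasure_exchangeable (τ : ℝ) (hτ0 : 0 ≤ τ) (hτ1 : τ ≤ 1)
    (n : ℕ) (hn : 1 ≤ n) (σ : Equiv.Perm (Fin n)) :
    (urnMeasure τ n).map (fun x => x ∘ σ) = urnMeasure τ n := by
  obtain ⟨n, rfl⟩ : ∃ m, n = m + 1 := ⟨n - 1, by omega⟩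
  have key : σ ∈ Submonoid.closure
      (Set.range fun i : Fin n => Equiv.swap i.castSucc i.succ) := by
    rw [Equiv.Perm.mclosure_swap_castSucc_succ]; trivial
  induction key using Submonoid.closure_induction with
  | mem s hs =>
    obtain ⟨i, rfl⟩ := hs
    refine Measure.ext_of_lintegral _ fun f hf => ?_
    rw [lintegral_map hf (meas_comp _)]
    exact adj_swap τ n i f hf
  | one => exact Measure.map_id
  | mul a b _ _ ha hb =>
    have : (fun x : Fin (n+1) → Circle1 => x ∘ ⇑(a * b)) =
      (fun x : Fin (n+1) → Circle1 => x ∘ ⇑b) ∘ (fun x => x ∘ ⇑a) := rfl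
    rw [this, ← Measure.map_map (meas_comp b) (meas_comp a), ha, hb]

end
end

section
/- Let τ ∈ [0,1], n ≥ 1, and let π be a partition of {1,…,n}. Let π' be the partition of {1,…,n+1} obtained from π by adjoining {n+1} as a new singleton block. Then m_{n+1}(A_{π'}) = ((1−τ)/((1−τ)+nτ)) · m_n(A_π). -/
open MeasureTheory

noncomputable section

/-- For a partition `π` of `{1,…,n}`, the set `A_π` of `x` with `x i = x j` iff `i`
and `j` lie in the same block of `π`. -/
def samePartSet {n : ℕ} (P : Finpartition (Finset.univ : Finset (Fin n))) :
    Set (Fin n → Circle1) :=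
  {x | ∀ i j : Fin n, x i = x j ↔ ∃ B ∈ P.parts, i ∈ B ∧ j ∈ B}

lemma urn_measurableSet_samePartSet {n : ℕ} (P : Finpartition (Finset.univ : Finset (Fin n))) :
    MeasurableSet (samePartSet P) := by
  unfold samePartSet
  simp only [Set.ofPred_forall]
  refine MeasurableSet.iInter fun i => MeasurableSet.iInter fun j => ?_
  have h : MeasurableSet {x : Fin n → Circle1 | x i = x j} :=
    measurableSet_eq_fun (measurable_pi_apply i) (measurable_pi_apply j)
  by_cases hB : ∃ B ∈ P.parts, i ∈ B ∧ j ∈ B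
  · simpa only [hB, iff_true] using h
  · simp only [hB, iff_false]
    exact h.compl

lemma urn_measurable_snoc (n : ℕ) :
    Measurable (fun p : (Fin n → Circle1) × Circle1 =>
      (Fin.snoc (α := fun _ => Circle1) p.1 p.2 : Fin (n + 1) → Circle1)) := by
  refine measurable_pi_lambda _ fun i => ?_
  refine Fin.lastCases ?_ (fun j => ?_) i
  · simpa only [Fin.snoc_last] using measurable_snd
  · simp only [Fin.snoc_castSucc]
    exact (measurable_pi_apply j).comp measurable_fst

lemma urn_map_apply (τ : ℝ) {n : ℕ} (x : Fin n → Circle1) {s : Set (Fin (n + 1) → Circle1)}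
    (hs : MeasurableSet s) :
    (urnKernel τ x).map (Fin.snoc (α := fun _ => Circle1) x) s =
      (ENNReal.ofReal ((1 - τ) + n * τ))⁻¹ *
        (ENNReal.ofReal (1 - τ) *
          (volume : Measure Circle1) {y | Fin.snoc (α := fun _ => Circle1) x y ∈ s}
        + ENNReal.ofReal τ * ∑ i : Fin n,
          s.indicator 1 (Fin.snoc (α := fun _ => Circle1) x (x i))) := by
  have hm : Measurable (Fin.snoc (α := fun _ => Circle1) x : Circle1 → Fin (n + 1) → Circle1) :=
    (urn_measurable_snoc n).comp measurable_prodMk_left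
  rw [Measure.map_apply hm hs]
  simp only [urnKernel, Measure.smul_apply, Measure.add_apply, Measure.finsetSum_apply,
    smul_eq_mul, Measure.dirac_apply' _ (hm hs)]
  rfl

lemma urn_measurable_kernel (τ : ℝ) (n : ℕ) :
    Measurable (fun x : Fin n → Circle1 =>
      (urnKernel τ x).map (Fin.snoc (α := fun _ => Circle1) x)) := by
  refine Measure.measurable_of_measurable_coe _ fun s hs => ?_
  simp only [urn_map_apply τ _ hs]
  have h1 : Measurable fun x : Fin n → Circle1 =>
      (volume : Measure Circle1) {y | Fin.snoc (α := fun _ => Circle1) x y ∈ s} :=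
    measurable_measure_prodMk_left (urn_measurable_snoc n hs)
  have h2 : ∀ i : Fin n, Measurable fun x : Fin n → Circle1 =>
      s.indicator (1 : (Fin (_ + 1) → Circle1) → ENNReal) (Fin.snoc (α := fun _ => Circle1) x (x i)) := fun i =>
    (measurable_one.indicator hs).comp
      ((urn_measurable_snoc n).comp (measurable_id.prodMk (measurable_pi_apply i)))
  exact ((h1.const_mul _).add
    ((Finset.measurable_sum _ fun i _ => h2 i).const_mul _)).const_mul _

lemma urn_snoc_mem {n : ℕ} (P : Finpartition (Finset.univ : Finset (Fin n)))
    (P' : Finpartition (Finset.univ : Finset (Fin (n + 1))))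
    (hP' : P'.parts =
      insert {Fin.last n} (P.parts.image (Finset.map Fin.castSuccEmb)))
    (x : Fin n → Circle1) (y : Circle1) :
    Fin.snoc (α := fun _ => Circle1) x y ∈ samePartSet P' ↔
      x ∈ samePartSet P ∧ ∀ i, x i ≠ y := by
  have hcl : ∀ (i : Fin n), i.castSucc ≠ Fin.last n := fun i => (Fin.castSucc_lt_last i).ne
  simp only [samePartSet, Set.mem_ofPred_eq, hP', Finset.exists_mem_insert, Finset.mem_image,
    Fin.forall_fin_succ', Fin.snoc_castSucc, Fin.snoc_last]
  simp [hcl, Finset.mem_map]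
  constructor
  · rintro ⟨h, -⟩
    exact ⟨fun i => (h i).1, fun i => (h i).2⟩
  · rintro ⟨h1, h2⟩
    exact ⟨fun i => ⟨h1 i, h2 i⟩, fun i hi => h2 i hi.symm⟩

/-- if `π'` is obtained from the partition `π` of `{1,…,n}` by adjoining
`{n+1}` as a new singleton block, then
`m_{n+1}(A_{π'}) = ((1−τ)/((1−τ)+nτ)) · m_n(A_π)`. -/
theorem urnMeasure_extend_singleton (τ : ℝ) (hτ0 : 0 ≤ τ) (hτ1 : τ ≤ 1)
    (n : ℕ) (hn : 1 ≤ n)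
    (P : Finpartition (Finset.univ : Finset (Fin n)))
    (P' : Finpartition (Finset.univ : Finset (Fin (n + 1))))
    (hP' : P'.parts =
      insert {Fin.last n} (P.parts.image (Finset.map Fin.castSuccEmb))) :
    urnMeasure τ (n + 1) (samePartSet P')
      = ENNReal.ofReal ((1 - τ) / ((1 - τ) + n * τ)) * urnMeasure τ n (samePartSet P) := by
  obtain ⟨k, rfl⟩ : ∃ k, n = k + 1 := ⟨n - 1, by omega⟩
  have hA := urn_measurableSet_samePartSet P
  have hA' := urn_measurableSet_samePartSet P'
  have hD : 0 < (1 - τ) + ((k + 1 : ℕ) : ℝ) * τ := by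
    push_cast
    nlinarith [mul_nonneg (Nat.cast_nonneg (α := ℝ) k) hτ0]
  have hvol : ∀ x : Fin (k + 1) → Circle1,
      (volume : Measure Circle1) {y | ∀ i, x i ≠ y} = 1 := by
    intro x
    have h1 : {y | ∀ i, x i ≠ y} = (Set.range x)ᶜ := by
      ext y; simp
    have hp : IsProbabilityMeasure (volume : Measure Circle1) := ⟨UnitAddCircle.measure_univ⟩
    have hs : ∀ y : Circle1, (volume : Measure Circle1) {y} = 0 := by
      intro y
      have := AddCircle.volume_closedBall (T := 1) (x := y) 0
      simpa using this
    rw [h1, prob_compl_eq_one_iff (Set.finite_range x).measurableSet]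
    rw [← Set.iUnion_singleton_eq_range]
    exact measure_iUnion_null fun i => hs (x i)
  have key : ∀ x : Fin (k + 1) → Circle1,
      (urnKernel τ x).map (Fin.snoc (α := fun _ => Circle1) x) (samePartSet P') =
        (samePartSet P).indicator
          (fun _ => ENNReal.ofReal ((1 - τ) / ((1 - τ) + ((k + 1 : ℕ) : ℝ) * τ))) x := by
    intro x
    rw [urn_map_apply τ x hA']
    have hz : ∀ i, (samePartSet P').indicator (1 : (Fin (_ + 1) → Circle1) → ENNReal)
        (Fin.snoc (α := fun _ => Circle1) x (x i)) = 0 := by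
      intro i
      refine Set.indicator_of_notMem ?_ _
      rw [urn_snoc_mem P P' hP']
      exact fun h => h.2 i rfl
    simp only [hz, urn_snoc_mem P P' hP', Finset.sum_const_zero, mul_zero, add_zero]
    by_cases hx : x ∈ samePartSet P
    · simp only [hx, true_and, hvol, Set.indicator_of_mem, mul_one]
      rw [ENNReal.ofReal_div_of_pos hD, div_eq_mul_inv, mul_comm]
    · simp [hx]
  change ((urnMeasure τ (k + 1)).bind
        (fun x => (urnKernel τ x).map (Fin.snoc (α := fun _ => Circle1) x))) _ = _
  rw [Measure.bind_apply hA' (urn_measurable_kernel τ (k + 1)).aemeasurable]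
  simp only [key]
  rw [lintegral_indicator_const hA]

end
end

section
/- Let P and Q be two probability measures on the space of Borel probability measures on S¹ (equipped with the topology of weak convergence and its Borel σ-algebra). Suppose that for every n ≥ 1 and every continuous function g : (Fin n → S¹) → ℝ, ∫ (∫ g dν^{⊗n}) dP(ν) = ∫ (∫ g dν^{⊗n}) dQ(ν), i.e. the moment measures E_P[ν^{⊗n}] and E_Q[ν^{⊗n}] coincide for all n. Then P = Q. -/
open MeasureTheory

noncomputable section

/-- The space of Borel probability measures on the circle, with the topology of weak
convergence, carries its Borel σ-algebra. -/
instance : MeasurableSpace (ProbabilityMeasure Circle1) :=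
  borel (ProbabilityMeasure Circle1)

instance borelSpace_PM : BorelSpace (ProbabilityMeasure Circle1) := ⟨rfl⟩

/-- Evaluation functional. -/
def evalPM (f : C(Circle1, ℝ)) :
    BoundedContinuousFunction (ProbabilityMeasure Circle1) ℝ :=
  BoundedContinuousFunction.mkOfCompact
    ⟨fun ν => ∫ x, f x ∂(ν : Measure Circle1),
      ProbabilityMeasure.continuous_integral_boundedContinuousFunction
        (BoundedContinuousFunction.mkOfCompact f)⟩

/-- The algebra generated by evaluations. -/
def algPM : StarSubalgebra ℝ (BoundedContinuousFunction (ProbabilityMeasure Circle1) ℝ) :=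
  { Algebra.adjoin ℝ (Set.range evalPM) with
    star_mem' := by
      intro a ha
      have : star a = a := by ext; simp
      rw [this]; exact ha }

theorem mem_closure_PM (g : BoundedContinuousFunction (ProbabilityMeasure Circle1) ℝ)
    (hg : g ∈ Submonoid.closure (Set.range evalPM)) :
    ∃ (n : ℕ) (f : Fin n → C(Circle1, ℝ)),
      ∀ ν : ProbabilityMeasure Circle1, g ν = ∏ i, ∫ x, f i x ∂(ν : Measure Circle1) := by
  induction hg using Submonoid.closure_induction with
  | mem x hx =>
    obtain ⟨f, rfl⟩ := hx
    exact ⟨1, fun _ => f, fun ν => by simp [evalPM]; rfl⟩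
  | one => exact ⟨0, Fin.elim0, fun ν => by simp⟩
  | mul x y _ _ hx hy =>
    obtain ⟨n, f, hf⟩ := hx
    obtain ⟨m, f', hf'⟩ := hy
    exact ⟨n + m, Fin.append f f', fun ν => by simp [hf, hf', Fin.prod_univ_add]⟩

theorem eq_of_moment_measures_eq
    (P Q : Measure (ProbabilityMeasure Circle1))
    (hP : IsProbabilityMeasure P) (hQ : IsProbabilityMeasure Q)
    (h : ∀ (n : ℕ), 1 ≤ n → ∀ g : (Fin n → Circle1) → ℝ, Continuous g →
      ∫ ν, (∫ x, g x ∂(Measure.pi fun _ : Fin n => (ν : Measure Circle1))) ∂P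
        = ∫ ν, (∫ x, g x ∂(Measure.pi fun _ : Fin n => (ν : Measure Circle1))) ∂Q) :
    P = Q := by
  let : MetricSpace (ProbabilityMeasure Circle1) :=
    TopologicalSpace.metrizableSpaceMetric _
  refine ext_of_forall_mem_subalgebra_integral_eq_of_polish (𝕜 := ℝ) (A := algPM) ?_ ?_
  · intro μ ν hne
    by_contra hcon
    apply hne
    have i1 : IsProbabilityMeasure (μ : Measure Circle1) := μ.2
    have i2 : IsProbabilityMeasure (ν : Measure Circle1) := ν.2
    apply Subtype.ext
    change (μ : Measure Circle1) = (ν : Measure Circle1)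
    apply ext_of_forall_integral_eq_of_IsFiniteMeasure
    intro f
    by_contra hf
    apply hcon
    refine ⟨evalPM f.toContinuousMap, ⟨(evalPM f.toContinuousMap).toContinuousMap,
      ⟨_, Algebra.subset_adjoin ⟨f.toContinuousMap, rfl⟩, rfl⟩, rfl⟩, hf⟩
  · intro g hg
    have hg' : g ∈ Submodule.span ℝ
        (Submonoid.closure (Set.range evalPM) : Set _) := by
      rw [← Algebra.adjoin_eq_span]; exact hg
    induction hg' using Submodule.span_induction with
    | mem x hx =>
      obtain ⟨n, f, hf⟩ := mem_closure_PM x hx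
      rcases Nat.eq_zero_or_pos n with rfl | hn
      · simp [hf]
      · have key := h n hn (fun x => ∏ i, f i (x i)) (by fun_prop)
        have e : ∀ ν : ProbabilityMeasure Circle1,
            ∫ x, (∏ i, f i (x i)) ∂(Measure.pi fun _ : Fin n => (ν : Measure Circle1))
              = x ν := by
          intro ν
          rw [hf]
          exact integral_fintype_prod_eq_prod (μ := fun _ : Fin n => (ν : Measure Circle1))
            (fun i y => f i y)
        simpa only [e] using key
    | zero => simp
    | add x y hx hy ihx ihy =>
      have hx' : x ∈ algPM := by
        change x ∈ Subalgebra.toSubmodule (Algebra.adjoin ℝ (Set.range evalPM))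
        rw [Algebra.adjoin_eq_span]; exact hx
      have hy' : y ∈ algPM := by
        change y ∈ Subalgebra.toSubmodule (Algebra.adjoin ℝ (Set.range evalPM))
        rw [Algebra.adjoin_eq_span]; exact hy
      simp only [BoundedContinuousFunction.coe_add, Pi.add_apply]
      rw [integral_add (x.integrable P) (y.integrable P),
        integral_add (x.integrable Q) (y.integrable Q), ihx hx', ihy hy']
    | smul c x hx ih =>
      have hx' : x ∈ algPM := by
        change x ∈ Subalgebra.toSubmodule (Algebra.adjoin ℝ (Set.range evalPM))
        rw [Algebra.adjoin_eq_span]; exact hx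
      simp only [BoundedContinuousFunction.coe_smul]
      rw [integral_smul, integral_smul, ih hx']

end
end

section
/- Let m be a probability measure on E₁ × E₂ with first marginal m₁ and J : L²(m₁) → L²(m) the isometry J g = g ∘ Prod.fst. Let (P_t)_{t≥0} and (P¹_t)_{t≥0} be strongly continuous contraction semigroups on L²(m) and L²(m₁) respectively (i.e. P_0 = id, P_{s+t} = P_s ∘ P_t, ‖P_t‖ ≤ 1, and t ↦ P_t f is continuous on [0,∞) for every f). Define the resolvents G_α f = ∫₀^∞ e^{−αt} (P_t f) dt and G¹_α g = ∫₀^∞ e^{−αt} (P¹_t g) dt (Bochner integrals) for α > 0. If G_α ∘ J = J ∘ G¹_α for all α > 0, then P_t ∘ J = J ∘ P¹_t for all t ≥ 0. -/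
open MeasureTheory

noncomputable section

theorem laplace_aux {E : Type*} [NormedAddCommGroup E] [NormedSpace ℝ E] [CompleteSpace E]
    (φ : ℝ → E) (hφ : ContinuousOn φ (Set.Ici 0))
    (hint : ∀ α : ℝ, 0 < α → IntegrableOn (fun t => Real.exp (-α * t) • φ t) (Set.Ioi 0))
    (h0 : ∀ α : ℝ, 0 < α → ∫ t in Set.Ioi (0:ℝ), Real.exp (-α * t) • φ t = 0) :
    ∀ t : ℝ, 0 ≤ t → φ t = 0 := by
  have key : ∀ n : ℕ, ∀ t : ℝ, (Real.exp (-t)) ^ n • (Real.exp (-1 * t) • φ t)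
      = Real.exp (-((n:ℝ)+1) * t) • φ t := by
    intro n t
    rw [smul_smul, ← Real.exp_nat_mul, ← Real.exp_add]
    congr 2; ring
  have hpos : ∀ n : ℕ, (0:ℝ) < (n:ℝ) + 1 := fun n => by positivity
  have hpint : ∀ p : Polynomial ℝ, IntegrableOn
      (fun t => p.eval (Real.exp (-t)) • (Real.exp (-1 * t) • φ t)) (Set.Ioi 0) ∧
      ∫ t in Set.Ioi (0:ℝ), p.eval (Real.exp (-t)) • (Real.exp (-1 * t) • φ t) = 0 := by
    intro p
    have e : (fun t => p.eval (Real.exp (-t)) • (Real.exp (-1 * t) • φ t)) =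
        fun t => ∑ n ∈ Finset.range (p.natDegree + 1),
          p.coeff n • (Real.exp (-((n:ℝ)+1) * t) • φ t) := by
      funext t
      rw [Polynomial.eval_eq_sum_range, Finset.sum_smul]
      refine Finset.sum_congr rfl fun n _ => ?_
      rw [← key, smul_smul (p.coeff n)]
    rw [e]
    constructor
    · exact integrable_finsetSum _ fun n _ => (hint _ (hpos n)).smul (p.coeff n)
    · have hi : ∀ n ∈ Finset.range (p.natDegree + 1), IntegrableOn
          (fun t => p.coeff n • (Real.exp (-((n:ℝ)+1) * t) • φ t)) (Set.Ioi 0) :=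
        fun n _ => (hint _ (hpos n)).smul (p.coeff n)
      rw [integral_finsetSum _ hi]
      refine Finset.sum_eq_zero fun n _ => ?_
      rw [integral_smul, h0 _ (hpos n), smul_zero]
  have hcont : ContinuousOn (fun t => Real.exp (-1 * t) • φ t) (Set.Ici 0) :=
    ContinuousOn.smul (by fun_prop) hφ
  have hI1 := hint 1 one_pos
  have hae : ∀ᵐ t : ℝ, t ∈ Set.Ioi (0:ℝ) → Real.exp (-1 * t) • φ t = 0 := by
    refine isOpen_Ioi.ae_eq_zero_of_integral_contDiff_smul_eq_zero
      (hI1.locallyIntegrableOn) ?_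
    intro g hg hgc hgs
    have hg0 : g 0 = 0 := by
      by_contra h
      exact lt_irrefl (0:ℝ) (hgs (subset_tsupport g h))
    have hF : Continuous (fun x : ℝ => g (-Real.log x)) := by
      rw [continuous_iff_continuousAt]
      intro x
      by_cases hx : x = 0
      · subst hx
        rw [continuousAt_iff_punctured_nhds]
        simp only [Real.log_zero, neg_zero, hg0]
        have h1 : Filter.Tendsto g Filter.atTop (nhds 0) :=
          hgc.is_zero_at_infty.mono_left atTop_le_cocompact
        exact h1.comp (Filter.tendsto_neg_atBot_atTop.comp Real.tendsto_log_nhdsNE_zero)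
      · exact hg.continuous.continuousAt.comp (Real.continuousAt_log hx).neg
    have hres : ∫ t in Set.Ioi (0:ℝ), g t • (Real.exp (-1 * t) • φ t) = 0 := by
      rw [← norm_eq_zero]
      refine le_antisymm ?_ (norm_nonneg _)
      set C := ∫ t in Set.Ioi (0:ℝ), ‖Real.exp (-1 * t) • φ t‖ with hC
      have hC0 : 0 ≤ C := integral_nonneg fun _ => norm_nonneg _
      have hgint : IntegrableOn (fun t => g t • (Real.exp (-1 * t) • φ t)) (Set.Ioi 0) := by
        obtain ⟨M, hM⟩ := hgc.exists_bound_of_continuous hg.continuous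
        exact hI1.bdd_smul M hg.continuous.aestronglyMeasurable
          (Filter.Eventually.of_forall hM)
      refine le_of_forall_pos_le_add fun ε hε => ?_
      obtain ⟨p, hp⟩ := exists_polynomial_near_of_continuousOn 0 1 _ hF.continuousOn
        (ε / (C + 1)) (by positivity)
      have hd : ∫ t in Set.Ioi (0:ℝ), g t • (Real.exp (-1 * t) • φ t) =
          ∫ t in Set.Ioi (0:ℝ), (g t • (Real.exp (-1 * t) • φ t) -
            p.eval (Real.exp (-t)) • (Real.exp (-1 * t) • φ t)) := by
        rw [integral_sub hgint (hpint p).1, (hpint p).2, sub_zero]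
      rw [hd]
      calc _ ≤ ∫ t in Set.Ioi (0:ℝ), (ε / (C + 1)) * ‖Real.exp (-1 * t) • φ t‖ := by
            refine norm_integral_le_of_norm_le (hI1.norm.const_mul _) ?_
            refine (ae_restrict_iff' measurableSet_Ioi).2 (Filter.Eventually.of_forall ?_)
            intro t ht
            rw [← sub_smul, norm_smul]
            have ht' : (0:ℝ) < t := ht
            have := hp (Real.exp (-t)) ⟨(Real.exp_pos _).le, Real.exp_le_one_iff.2 (by linarith)⟩
            rw [Real.log_exp, neg_neg] at this
            rw [Real.norm_eq_abs, abs_sub_comm]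
            gcongr
        _ = ε / (C + 1) * C := by rw [integral_const_mul]
        _ ≤ 0 + ε := by
            rw [zero_add, div_mul_eq_mul_div, div_le_iff₀ (by positivity)]
            nlinarith
    rw [← hres, eq_comm]
    refine setIntegral_eq_integral_of_forall_compl_eq_zero fun t ht => ?_
    have : g t = 0 := by
      by_contra h
      exact ht (hgs (subset_tsupport g h))
    rw [this, zero_smul]
  have heq : Set.EqOn (fun t => Real.exp (-1 * t) • φ t) (fun _ => 0) (Set.Ioi 0) := by
    refine Measure.eqOn_open_of_ae_eq (μ := volume) ?_ isOpen_Ioi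
      (hcont.mono Set.Ioi_subset_Ici_self) continuousOn_const
    exact (ae_restrict_iff' measurableSet_Ioi).2 hae
  have heq2 : Set.EqOn (fun t => Real.exp (-1 * t) • φ t) (fun _ => 0) (Set.Ici 0) :=
    heq.of_subset_closure hcont continuousOn_const Set.Ioi_subset_Ici_self
      (by rw [closure_Ioi])
  intro t ht
  have := heq2 ht
  exact (smul_eq_zero.1 this).resolve_left (Real.exp_pos _).ne'

theorem laplace_int_aux {E : Type*} [NormedAddCommGroup E] [NormedSpace ℝ E]
    (φ : ℝ → E) (hφ : ContinuousOn φ (Set.Ici 0)) (M : ℝ) (hM : ∀ t, 0 ≤ t → ‖φ t‖ ≤ M)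
    (α : ℝ) (hα : 0 < α) :
    IntegrableOn (fun t => Real.exp (-α * t) • φ t) (Set.Ioi 0) := by
  have h1 : IntegrableOn (fun t => Real.exp (-α * t)) (Set.Ioi 0) :=
    integrableOn_exp_mul_Ioi (by linarith) 0
  refine h1.smul_bdd M
    ((hφ.mono Set.Ioi_subset_Ici_self).aestronglyMeasurable measurableSet_Ioi) ?_
  exact (ae_restrict_iff' measurableSet_Ioi).2
    (Filter.Eventually.of_forall fun t ht => hM t (le_of_lt ht))

/-- let `m` be a probability measure on `E₁ × E₂` with first marginal
`m₁ = m.map Prod.fst` and `J : L²(m₁) → L²(m)` the isometry `J g = g ∘ Prod.fst`.  Let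
`(P_t)` and `(P¹_t)` be strongly continuous contraction semigroups on `L²(m)` and
`L²(m₁)`, with resolvents `G_α f = ∫₀^∞ e^{−αt} P_t f dt`, `G¹_α g = ∫₀^∞ e^{−αt} P¹_t g dt`
(Bochner integrals).  If `G_α ∘ J = J ∘ G¹_α` for all `α > 0`, then `P_t ∘ J = J ∘ P¹_t`
for all `t ≥ 0`. -/
theorem semigroup_intertwines_of_resolvent_intertwines
    {E₁ E₂ : Type*} [MeasurableSpace E₁] [MeasurableSpace E₂]
    (m : Measure (E₁ × E₂)) [IsProbabilityMeasure m]
    (J : Lp ℝ 2 (m.map Prod.fst) →L[ℝ] Lp ℝ 2 m)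
    (hJ : ∀ g : Lp ℝ 2 (m.map Prod.fst), (J g : E₁ × E₂ → ℝ) =ᵐ[m] fun p => g p.1)
    (P : ℝ → Lp ℝ 2 m →L[ℝ] Lp ℝ 2 m)
    (P₁ : ℝ → Lp ℝ 2 (m.map Prod.fst) →L[ℝ] Lp ℝ 2 (m.map Prod.fst))
    (hP0 : P 0 = ContinuousLinearMap.id ℝ _)
    (hPadd : ∀ s t : ℝ, 0 ≤ s → 0 ≤ t → P (s + t) = (P s).comp (P t))
    (hPcontr : ∀ t : ℝ, 0 ≤ t → ‖P t‖ ≤ 1)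
    (hPcont : ∀ f, ContinuousOn (fun t : ℝ => P t f) (Set.Ici 0))
    (hP₁0 : P₁ 0 = ContinuousLinearMap.id ℝ _)
    (hP₁add : ∀ s t : ℝ, 0 ≤ s → 0 ≤ t → P₁ (s + t) = (P₁ s).comp (P₁ t))
    (hP₁contr : ∀ t : ℝ, 0 ≤ t → ‖P₁ t‖ ≤ 1)
    (hP₁cont : ∀ g, ContinuousOn (fun t : ℝ => P₁ t g) (Set.Ici 0))
    (hres : ∀ α : ℝ, 0 < α → ∀ g : Lp ℝ 2 (m.map Prod.fst),
      (∫ t in Set.Ioi (0 : ℝ), Real.exp (-α * t) • P t (J g))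
        = J (∫ t in Set.Ioi (0 : ℝ), Real.exp (-α * t) • P₁ t g)) :
    ∀ t : ℝ, 0 ≤ t → ∀ g, P t (J g) = J (P₁ t g) := by
  intro t ht g
  have hb : ∀ t : ℝ, 0 ≤ t → ‖P t (J g)‖ ≤ ‖J g‖ := fun t ht =>
    ((P t).le_of_opNorm_le (hPcontr t ht) _).trans (by rw [one_mul])
  have hb₁ : ∀ t : ℝ, 0 ≤ t → ‖P₁ t g‖ ≤ ‖g‖ := fun t ht =>
    ((P₁ t).le_of_opNorm_le (hP₁contr t ht) _).trans (by rw [one_mul])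
  have i1 := laplace_int_aux (fun t => P t (J g)) (hPcont _) _ hb
  have i2 := laplace_int_aux (fun t => P₁ t g) (hP₁cont _) _ hb₁
  have e : ∀ α : ℝ, (fun t : ℝ => Real.exp (-α * t) • (P t (J g) - J (P₁ t g))) =
      fun t => Real.exp (-α * t) • P t (J g) - J (Real.exp (-α * t) • P₁ t g) := by
    intro α
    funext t
    rw [smul_sub, map_smul]
  have i3 : ∀ α : ℝ, 0 < α →
      IntegrableOn (fun t => J (Real.exp (-α * t) • P₁ t g)) (Set.Ioi 0) :=
    fun α hα => J.integrable_comp (i2 α hα)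
  refine sub_eq_zero.1 (laplace_aux (fun t => P t (J g) - J (P₁ t g)) ?_ ?_ ?_ t ht)
  · exact (hPcont _).sub (J.continuous.comp_continuousOn (hP₁cont g))
  · intro α hα
    rw [e]
    exact (i1 α hα).sub (i3 α hα)
  · intro α hα
    rw [e, integral_sub (i1 α hα) (i3 α hα), hres α hα g, J.integral_comp_comm (i2 α hα), sub_self]


end
end
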